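/- arXiv:1510.02999 — 2 statements merged into one kernel-verified Lean document; each statement's English description precedes it below -/
import Mathlib

section
/- Let G be a real 3×3 matrix with ‖G‖_F ≤ 1 and det(I + G) = 1, and set τ = (1/2) tr((I+G)(I+G)ᵀ). Then |τ − 3/2| ≤ 4 ‖G‖_F². -/
open Matrix

/-!
Write `S = ‖G‖_F²`. Since `tr ((I + G)(I + G)ᵀ) = 3 + 2 tr G + S`, everything rests on a bound
`tr G = O(S)`. Cauchy–Schwarz gives only the first-order bound `|tr G| ≤ √3 ‖G‖_F`, which suffices
when `S ≥ 1`. When `S ≤ 1`, the constraint `det (I + G) = 1` cancels the first-order term: it reads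
`tr G = -((tr G)² - tr (G²)) / 2 - det G`, where `(tr G)² ≤ 3 S` and `|tr (G²)| ≤ S` by
Cauchy–Schwarz, and `|det G| ≤ ‖G‖_F³ ≤ S` by Hadamard's inequality.
-/

section Algebra

variable {R n : Type*} [Fintype n] [DecidableEq n]

theorem trace_one_add_mul_transpose [NonAssocSemiring R] (A : Matrix n n R) :
    ((1 + A) * (1 + A)ᵀ).trace = Fintype.card n + 2 * A.trace + (A * Aᵀ).trace := by
  simp only [transpose_add, transpose_one, add_mul, mul_add, one_mul, mul_one, trace_add,
    trace_one, trace_transpose, two_mul]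
  abel

theorem two_mul_det_one_add_fin_three [CommRing R] (A : Matrix (Fin 3) (Fin 3) R) :
    2 * (1 + A).det = 2 + 2 * A.trace + (A.trace ^ 2 - (A * A).trace) + 2 * A.det := by
  simp only [det_fin_three, trace_fin_three, Matrix.add_apply, mul_apply, Fin.sum_univ_three,
    one_apply, ↓reduceIte, Fin.reduceEq, Fin.isValue, zero_ne_one, one_ne_zero]
  ring

end Algebra

section Frobenius

open scoped Matrix.Norms.Frobenius

variable {m n α : Type*} [Fintype m] [Fintype n]

theorem frobenius_norm_sq_eq_sum [SeminormedAddCommGroup α] (A : Matrix m n α) :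
    ‖A‖ ^ 2 = ∑ i, ∑ j, ‖A i j‖ ^ 2 := by
  rw [frobenius_norm_def, ← Real.sqrt_eq_rpow, Real.sq_sqrt (by positivity)]
  simp only [Real.rpow_two]

theorem frobenius_norm_sq_eq_trace_mul_transpose (A : Matrix m n ℝ) :
    ‖A‖ ^ 2 = (A * Aᵀ).trace := by
  rw [frobenius_norm_sq_eq_sum]
  simp only [Real.norm_eq_abs, sq_abs, trace, diag_apply, mul_apply, transpose_apply, ← sq]

theorem norm_trace_mul_le_mul_frobenius_norm [NonUnitalSeminormedRing α] (A : Matrix m n α)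
    (B : Matrix n m α) : ‖(A * B).trace‖ ≤ ‖A‖ * ‖B‖ := by
  have cauchy_schwarz : (∑ p : m × n, ‖A p.1 p.2‖ * ‖B p.2 p.1‖) ^ 2 ≤ (‖A‖ * ‖B‖) ^ 2 := by
    rw [mul_pow, ← frobenius_norm_transpose B, frobenius_norm_sq_eq_sum,
      frobenius_norm_sq_eq_sum, ← Fintype.sum_prod_type', ← Fintype.sum_prod_type']
    exact Finset.sum_mul_sq_le_sq_mul_sq _ _ _
  calc ‖(A * B).trace‖ = ‖∑ p : m × n, A p.1 p.2 * B p.2 p.1‖ := by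
        simp only [trace, diag_apply, mul_apply, Fintype.sum_prod_type]
    _ ≤ ∑ p : m × n, ‖A p.1 p.2‖ * ‖B p.2 p.1‖ := norm_sum_le_of_le _ fun _ _ => norm_mul_le _ _
    _ ≤ ‖A‖ * ‖B‖ := le_of_sq_le_sq cauchy_schwarz (by positivity)

theorem norm_trace_le_sqrt_card_mul_frobenius_norm [SeminormedRing α] [NormOneClass α]
    (A : Matrix n n α) : ‖A.trace‖ ≤ √(Fintype.card n) * ‖A‖ := by
  classical
  have norm_one_eq : ‖(1 : Matrix n n α)‖ = √(Fintype.card n) := by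
    simpa using congrArg NNReal.toReal (frobenius_nnnorm_one (n := n) (α := α))
  simpa [norm_one_eq, mul_comm] using norm_trace_mul_le_mul_frobenius_norm A 1

theorem norm_row_le_frobenius_norm [SeminormedAddCommGroup α] (A : Matrix m n α) (i : m) :
    ‖WithLp.toLp 2 (A i)‖ ≤ ‖A‖ := by
  refine le_of_sq_le_sq ?_ (norm_nonneg A)
  rw [PiLp.norm_sq_eq_of_L2, frobenius_norm_sq_eq_sum]
  exact Finset.single_le_sum (f := fun i => ∑ j, ‖A i j‖ ^ 2) (fun _ _ => by positivity)
    (Finset.mem_univ i)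

theorem abs_det_fin_le_prod_norm_row {k : ℕ} (A : Matrix (Fin k) (Fin k) ℝ) :
    |A.det| ≤ ∏ i, ‖WithLp.toLp 2 (A i)‖ := by
  let b := EuclideanSpace.basisFun (Fin k) ℝ
  let rows : Fin k → EuclideanSpace ℝ (Fin k) := fun i => WithLp.toLp 2 (A i)
  have : Fact (Module.finrank ℝ (EuclideanSpace ℝ (Fin k)) = k) := ⟨finrank_euclideanSpace_fin⟩
  have toMatrix_rows : b.toBasis.toMatrix rows = Aᵀ := by
    ext i j
    simp [b, rows, Module.Basis.toMatrix_apply]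
  calc |A.det| = |b.toBasis.det rows| := by
        rw [Module.Basis.det_apply, toMatrix_rows, det_transpose]
    _ = |b.toBasis.orientation.volumeForm rows| := (Orientation.volumeForm_robust' _ b rows).symm
    _ ≤ ∏ i, ‖rows i‖ := Orientation.abs_volumeForm_apply_le _ rows

theorem abs_det_le_prod_norm_row [DecidableEq n] (A : Matrix n n ℝ) :
    |A.det| ≤ ∏ i, ‖WithLp.toLp 2 (A i)‖ := by
  let e := Fintype.equivFin n
  have norm_row_reindex (i : n) :
      ‖WithLp.toLp 2 (reindex e e A (e i))‖ = ‖WithLp.toLp 2 (A i)‖ := by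
    simp only [EuclideanSpace.norm_eq, reindex_apply, submatrix_apply, Equiv.symm_apply_apply]
    rw [e.symm.sum_comp fun j => ‖A i j‖ ^ 2]
  calc |A.det| = |(reindex e e A).det| := by rw [det_reindex_self]
    _ ≤ ∏ k, ‖WithLp.toLp 2 (reindex e e A k)‖ := abs_det_fin_le_prod_norm_row _
    _ = ∏ i, ‖WithLp.toLp 2 (A i)‖ := by simp only [← e.prod_comp, norm_row_reindex]

theorem abs_det_le_frobenius_norm_pow_card [DecidableEq n] (A : Matrix n n ℝ) :
    |A.det| ≤ ‖A‖ ^ Fintype.card n :=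
  calc |A.det| ≤ ∏ i, ‖WithLp.toLp 2 (A i)‖ := abs_det_le_prod_norm_row A
    _ ≤ ∏ _i : n, ‖A‖ :=
        Finset.prod_le_prod (fun _ _ => norm_nonneg _) fun i _ => norm_row_le_frobenius_norm A i
    _ = ‖A‖ ^ Fintype.card n := Finset.prod_const _

theorem abs_trace_add_half_frobenius_norm_sq_le (G : Matrix (Fin 3) (Fin 3) ℝ)
    (hdet : (1 + G).det = 1) : |G.trace + ‖G‖ ^ 2 / 2| ≤ 5 / 2 * ‖G‖ ^ 2 := by
  have trace_sq_le : G.trace ^ 2 ≤ 3 * ‖G‖ ^ 2 := by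
    simpa [mul_pow] using pow_le_pow_left₀ (norm_nonneg _)
      (norm_trace_le_sqrt_card_mul_frobenius_norm G) 2
  rw [abs_le]
  rcases le_total ‖G‖ 1 with small | large
  · have trace_mul_self_le : |(G * G).trace| ≤ ‖G‖ ^ 2 :=
      (norm_trace_mul_le_mul_frobenius_norm G G).trans_eq (sq _).symm
    have det_le : |G.det| ≤ ‖G‖ ^ 2 :=
      (abs_det_le_frobenius_norm_pow_card G).trans
        (pow_le_pow_of_le_one (norm_nonneg G) small (by simp))
    have trace_eq := two_mul_det_one_add_fin_three G
    rw [hdet] at trace_eq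
    obtain ⟨_, _⟩ := abs_le.1 trace_mul_self_le
    obtain ⟨_, _⟩ := abs_le.1 det_le
    constructor <;> linarith [sq_nonneg G.trace]
  · have trace_le : |G.trace| ≤ 2 * ‖G‖ ^ 2 := by
      have sq_le_pow_four : ‖G‖ ^ 2 ≤ ‖G‖ ^ 4 := pow_le_pow_right₀ large (by norm_num)
      refine abs_le_of_sq_le_sq ?_ (by positivity)
      calc G.trace ^ 2 ≤ 3 * ‖G‖ ^ 2 := trace_sq_le
        _ ≤ 4 * ‖G‖ ^ 4 := by linarith [sq_nonneg ‖G‖]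
        _ = (2 * ‖G‖ ^ 2) ^ 2 := by ring
    obtain ⟨_, _⟩ := abs_le.1 trace_le
    constructor <;> linarith [sq_nonneg ‖G‖]

theorem first_invariant_near_three_halves_general (G : Matrix (Fin 3) (Fin 3) ℝ)
    (hdet : (1 + G).det = 1) :
    |(1 / 2) * ((1 + G) * (1 + G)ᵀ).trace - 3 / 2| ≤ 5 / 2 * (∑ i, ∑ j, G i j ^ 2) := by
  have sum_eq : ∑ i, ∑ j, G i j ^ 2 = ‖G‖ ^ 2 := by
    simp only [frobenius_norm_sq_eq_sum, Real.norm_eq_abs, sq_abs]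
  have invariant_eq :
      (1 / 2) * ((1 + G) * (1 + G)ᵀ).trace - 3 / 2 = G.trace + ‖G‖ ^ 2 / 2 := by
    rw [trace_one_add_mul_transpose, ← frobenius_norm_sq_eq_trace_mul_transpose, Fintype.card_fin]
    push_cast
    ring
  rw [sum_eq, invariant_eq]
  exact abs_trace_add_half_frobenius_norm_sq_le G hdet

end Frobenius

/-- If `G` is a real 3×3 matrix with `‖G‖_F ≤ 1` and `det(I + G) = 1`, and
`τ = (1/2) tr((I+G)(I+G)ᵀ)`, then `|τ − 3/2| ≤ 4 ‖G‖_F²`. -/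
theorem first_invariant_near_three_halves (G : Matrix (Fin 3) (Fin 3) ℝ)
    (hG : Real.sqrt (∑ i, ∑ j, G i j ^ 2) ≤ 1)
    (hdet : (1 + G).det = 1) :
    |(1 / 2) * ((1 + G) * (1 + G)ᵀ).trace - 3 / 2| ≤ 4 * (∑ i, ∑ j, G i j ^ 2) :=
  (first_invariant_near_three_halves_general G hdet).trans (by gcongr; norm_num)
end

section
/- Let Φ : ℝ × ℝ³ → ℝ³ be smooth, suppose that for each t the map Φ(t,·) : ℝ³ → ℝ³ is a bijection whose inverse Ψ(t,·) is such that Ψ : ℝ × ℝ³ → ℝ³ is smooth, and assume det (D_X Φ)(t,X) = 1 for all (t,X). Define the Eulerian velocity v(t,x) = (∂_t Φ)(t, Ψ(t,x)). Then v is divergence free: ∂_k v_k(t,x) = 0 for all (t,x). -/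
noncomputable section

/-- Three-dimensional Euclidean space. -/
abbrev E3 : Type := EuclideanSpace ℝ (Fin 3)

/-- The spatial partial derivative `∂_j u` of a scalar function on `ℝ³`. -/
noncomputable def pd (j : Fin 3) (u : E3 → ℝ) (x : E3) : ℝ :=
  fderiv ℝ u x (EuclideanSpace.single j 1)

/-!
The derivative of the velocity `v(t, ·) = (∂_t Φ)(t, Ψ(t, ·))` is `D_X ∂_t Φ ∘ D_x Ψ`. Mixed partial
derivatives commute and `D_x Ψ` is the inverse of `D_X Φ`, so by Jacobi's formula its trace is the
logarithmic time derivative of `J = det D_X Φ`. This is Euler's expansion formula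
`∂_t J = (div v) J`, whose left-hand side vanishes when `J` does not depend on time.
-/

theorem det_ne_zero_of_comp_eq_id {R E : Type*} [CommRing R] [Nontrivial R] [AddCommGroup E]
    [Module R E] [TopologicalSpace E] {A B : E →L[R] E} (h : A ∘L B = .id R E) : A.det ≠ 0 := by
  have hmul : A.det * B.det = 1 :=
    (LinearMap.det_comp _ _).symm.trans
      ((congrArg ContinuousLinearMap.det h).trans LinearMap.det_id)
  exact left_ne_zero_of_mul_eq_one hmul

section Jacobi

variable {𝕜 : Type*} [NontriviallyNormedField 𝕜] {t : 𝕜}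

theorem hasDerivAt_matrix_det {R n : Type*} [NormedCommRing R] [NormedAlgebra 𝕜 R]
    [Fintype n] [DecidableEq n] {M : 𝕜 → Matrix n n R} {M' : Matrix n n R}
    (hM : ∀ i j, HasDerivAt (fun s => M s i j) (M' i j) t) :
    HasDerivAt (fun s => (M s).det) ((M t).adjugate * M').trace t := by
  have hcols : ((M t).adjugate * M').trace = ∑ i, ((M t).updateCol i (M'.col i)).det := by
    refine Finset.sum_congr rfl fun i _ => ?_
    rw [← Matrix.cramer_apply, Matrix.cramer_eq_adjugate_mulVec]
    rfl
  have hleibniz : HasDerivAt (fun s => (M s).det) (∑ σ : Equiv.Perm n, (Equiv.Perm.sign σ : ℤ) •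
      ∑ i, (∏ j ∈ Finset.univ.erase i, M t (σ j) j) • M' (σ i) i) t := by
    simp only [Matrix.det_apply]
    exact HasDerivAt.fun_sum fun σ _ =>
      (HasDerivAt.fun_finsetProd fun i _ => hM (σ i) i).const_smul _
  convert hleibniz using 1
  rw [hcols]
  simp only [Matrix.det_apply, Finset.smul_sum]
  rw [Finset.sum_comm]
  refine Finset.sum_congr rfl fun σ _ => Finset.sum_congr rfl fun i _ => ?_
  rw [← Finset.prod_erase_mul _ _ (Finset.mem_univ i), Matrix.updateCol_self, smul_eq_mul]
  congr 2
  exact Finset.prod_congr rfl fun j hj => Matrix.updateCol_ne (Finset.ne_of_mem_erase hj)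

variable [CompleteSpace 𝕜] {E : Type*} [NormedAddCommGroup E] [NormedSpace 𝕜 E]
  [FiniteDimensional 𝕜 E]

theorem hasDerivAt_continuousLinearMap_det {A : 𝕜 → E →L[𝕜] E} {A' B : E →L[𝕜] E}
    (hA : HasDerivAt A A' t) (hB : A t ∘L B = .id 𝕜 E) :
    HasDerivAt (fun s => (A s).det) (LinearMap.trace 𝕜 E (A' ∘L B) * (A t).det) t := by
  let b := Module.finBasis 𝕜 E
  let toMat : (E →L[𝕜] E) → Matrix _ _ 𝕜 := fun L => LinearMap.toMatrix b b L
  have hmul (L L' : E →L[𝕜] E) : toMat (L ∘L L') = toMat L * toMat L' :=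
    LinearMap.toMatrix_comp b b b _ _
  have hdet (L : E →L[𝕜] E) : L.det = (toMat L).det := (LinearMap.det_toMatrix b _).symm
  have hentries (i j) : HasDerivAt (fun s => toMat (A s) i j) (toMat A' i j) t := by
    simp only [toMat, LinearMap.toMatrix_apply]
    exact ((b.coord i).toContinuousLinearMap ∘L .apply 𝕜 E (b j)).hasFDerivAt.comp_hasDerivAt t hA
  have hinv : toMat (A t) * toMat B = 1 := by
    rw [← hmul, hB]
    exact LinearMap.toMatrix_id b
  have hadj : (toMat (A t)).adjugate = (toMat (A t)).det • toMat B := by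
    rw [← mul_one (Matrix.adjugate _), ← hinv, ← mul_assoc, Matrix.adjugate_mul, smul_one_mul]
  have htrace : LinearMap.trace 𝕜 E (A' ∘L B) * (A t).det =
      ((toMat (A t)).adjugate * toMat A').trace := by
    rw [hadj, Matrix.smul_mul, Matrix.trace_smul, Matrix.trace_mul_comm, ← hmul, hdet, smul_eq_mul,
      mul_comm, LinearMap.trace_eq_matrix_trace 𝕜 b]
  rw [htrace]
  simp only [hdet]
  exact hasDerivAt_matrix_det hentries

end Jacobi

section MixedPartials

open Filter Function Topology

variable {𝕜 E F : Type*} [NontriviallyNormedField 𝕜] [NormedAddCommGroup E] [NormedSpace 𝕜 E]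
  [NormedAddCommGroup F] [NormedSpace 𝕜 F] {f : 𝕜 → E → F} {t : 𝕜} {x : E}

theorem eventually_differentiableAt_of_contDiffAt_two {g : E → F} (hg : ContDiffAt 𝕜 2 g x) :
    ∀ᶠ y in 𝓝 x, DifferentiableAt 𝕜 g y :=
  (hg.eventually (by simp)).mono fun _ hy => hy.differentiableAt two_ne_zero

theorem differentiableAt_fderiv_of_contDiffAt_two {g : E → F} (hg : ContDiffAt 𝕜 2 g x) :
    DifferentiableAt 𝕜 (fderiv 𝕜 g) x :=
  (hg.fderiv_right (m := 1) le_rfl).differentiableAt one_ne_zero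

theorem hasFDerivAt_curry_right (hf : DifferentiableAt 𝕜 (uncurry f) (t, x)) :
    HasFDerivAt (f t) (fderiv 𝕜 (uncurry f) (t, x) ∘L .inr 𝕜 𝕜 E) x :=
  hf.hasFDerivAt.comp x (hasFDerivAt_prodMk_right t x)

theorem hasDerivAt_curry_left (hf : DifferentiableAt 𝕜 (uncurry f) (t, x)) :
    HasDerivAt (fun s => f s x) (fderiv 𝕜 (uncurry f) (t, x) (1, 0)) t :=
  hf.hasFDerivAt.comp_hasDerivAt (f := fun s => (s, x)) t
    ((hasDerivAt_id t).prodMk (hasDerivAt_const t x))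

theorem hasFDerivAt_deriv_curry (hf : ContDiffAt 𝕜 2 (uncurry f) (t, x)) :
    HasFDerivAt (fun y => deriv (fun s => f s y) t)
      ((fderiv 𝕜 (fderiv 𝕜 (uncurry f)) (t, x)).flip (1, 0) ∘L .inr 𝕜 𝕜 E) x := by
  have hdiff : ∀ᶠ y in 𝓝 x, DifferentiableAt 𝕜 (uncurry f) (t, y) :=
    (Continuous.prodMk_right t).continuousAt.eventually
      (eventually_differentiableAt_of_contDiffAt_two hf)
  have hderiv : (fun y => deriv (fun s => f s y) t) =ᶠ[𝓝 x]
      fun y => fderiv 𝕜 (uncurry f) (t, y) (1, 0) :=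
    hdiff.mono fun y hy => (hasDerivAt_curry_left hy).deriv
  have hfderiv : HasFDerivAt (fun y => fderiv 𝕜 (uncurry f) (t, y))
      (fderiv 𝕜 (fderiv 𝕜 (uncurry f)) (t, x) ∘L .inr 𝕜 𝕜 E) x :=
    hasFDerivAt_curry_right (f := fun s y => fderiv 𝕜 (uncurry f) (s, y))
      (differentiableAt_fderiv_of_contDiffAt_two hf)
  exact ((ContinuousLinearMap.apply 𝕜 F ((1, 0) : 𝕜 × E)).hasFDerivAt.comp x
    hfderiv).congr_of_eventuallyEq hderiv

theorem hasDerivAt_fderiv_curry (hf : ContDiffAt 𝕜 (minSmoothness 𝕜 2) (uncurry f) (t, x)) :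
    HasDerivAt (fun s => fderiv 𝕜 (f s) x)
      (fderiv 𝕜 (fun y => deriv (fun s => f s y) t) x) t := by
  have hf₂ : ContDiffAt 𝕜 2 (uncurry f) (t, x) := hf.of_le le_minSmoothness
  have hdiff : ∀ᶠ s in 𝓝 t, DifferentiableAt 𝕜 (uncurry f) (s, x) :=
    (Continuous.prodMk_left x).continuousAt.eventually
      (eventually_differentiableAt_of_contDiffAt_two hf₂)
  have hfderiv : (fun s => fderiv 𝕜 (f s) x) =ᶠ[𝓝 t]
      fun s => fderiv 𝕜 (uncurry f) (s, x) ∘L .inr 𝕜 𝕜 E :=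
    hdiff.mono fun s hs => (hasFDerivAt_curry_right hs).fderiv
  have hderiv : HasDerivAt (fun s => fderiv 𝕜 (uncurry f) (s, x))
      (fderiv 𝕜 (fderiv 𝕜 (uncurry f)) (t, x) (1, 0)) t :=
    hasDerivAt_curry_left (f := fun s y => fderiv 𝕜 (uncurry f) (s, y))
      (differentiableAt_fderiv_of_contDiffAt_two hf₂)
  have hderiv_inr : HasDerivAt (fun s => fderiv 𝕜 (uncurry f) (s, x) ∘L .inr 𝕜 𝕜 E)
      (fderiv 𝕜 (fderiv 𝕜 (uncurry f)) (t, x) (1, 0) ∘L .inr 𝕜 𝕜 E) t :=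
    ((ContinuousLinearMap.compL 𝕜 E (𝕜 × E) F).flip (.inr 𝕜 𝕜 E)).hasFDerivAt.comp_hasDerivAt t
      hderiv
  have hsymm : fderiv 𝕜 (fun y => deriv (fun s => f s y) t) x =
      fderiv 𝕜 (fderiv 𝕜 (uncurry f)) (t, x) (1, 0) ∘L .inr 𝕜 𝕜 E := by
    rw [(hasFDerivAt_deriv_curry hf₂).fderiv]
    ext w
    exact hf.isSymmSndFDerivAt le_rfl _ _
  rw [hsymm]
  exact hderiv_inr.congr_of_eventuallyEq hfderiv

end MixedPartials

section Velocity

open Filter Function Topology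

variable (𝕜 : Type*) {E : Type*} [NontriviallyNormedField 𝕜] [NormedAddCommGroup E]
  [NormedSpace 𝕜 E]

/-- The divergence of a vector field on `E`, defined without coordinates as the trace of its
derivative. It is the junk value `0` where `u` is not differentiable, and when `E` is
infinite-dimensional. -/
def divergence (u : E → E) (x : E) : 𝕜 :=
  LinearMap.trace 𝕜 E (fderiv 𝕜 u x)

variable {𝕜}

/-- The Eulerian velocity `v(t, x) = (∂_t Φ)(t, Ψ(t, x))` of a motion `Φ` whose back-to-labels map
is `Ψ`: the velocity, seen at the position `x`, of the material point with label `Ψ t x`. -/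
def eulerianVelocity {α : Type*} (Φ : 𝕜 → α → E) (Ψ : 𝕜 → E → α) (t : 𝕜) (x : E) : E :=
  deriv (fun s => Φ s (Ψ t x)) t

variable {F : Type*} [NormedAddCommGroup F] [NormedSpace 𝕜 F] {t : 𝕜} {x : E}

theorem hasFDerivAt_eulerianVelocity {Φ : 𝕜 → F → E} {Ψ : 𝕜 → E → F}
    (hΦ : ContDiffAt 𝕜 2 (uncurry Φ) (t, Ψ t x)) (hΨ : DifferentiableAt 𝕜 (Ψ t) x) :
    HasFDerivAt (eulerianVelocity Φ Ψ t)
      (fderiv 𝕜 (fun X => deriv (fun s => Φ s X) t) (Ψ t x) ∘L fderiv 𝕜 (Ψ t) x) x :=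
  (hasFDerivAt_deriv_curry hΦ).differentiableAt.hasFDerivAt.comp x hΨ.hasFDerivAt

theorem fderiv_comp_fderiv_eq_id {φ : F → E} {ψ : E → F} (hφ : DifferentiableAt 𝕜 φ (ψ x))
    (hψ : DifferentiableAt 𝕜 ψ x) (hinv : ∀ᶠ y in 𝓝 x, φ (ψ y) = y) :
    fderiv 𝕜 φ (ψ x) ∘L fderiv 𝕜 ψ x = .id 𝕜 E :=
  (hφ.hasFDerivAt.comp x hψ.hasFDerivAt).unique ((hasFDerivAt_id x).congr_of_eventuallyEq hinv)

variable [CompleteSpace 𝕜] [FiniteDimensional 𝕜 E] {Φ Ψ : 𝕜 → E → E}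

theorem hasDerivAt_det_fderiv
    (hΦ : ContDiffAt 𝕜 (minSmoothness 𝕜 2) (uncurry Φ) (t, Ψ t x))
    (hΨ : DifferentiableAt 𝕜 (Ψ t) x) (hinv : ∀ᶠ y in 𝓝 x, Φ t (Ψ t y) = y) :
    HasDerivAt (fun s => (fderiv 𝕜 (Φ s) (Ψ t x)).det)
      (divergence 𝕜 (eulerianVelocity Φ Ψ t) x * (fderiv 𝕜 (Φ t) (Ψ t x)).det) t := by
  have hΦ₂ : ContDiffAt 𝕜 2 (uncurry Φ) (t, Ψ t x) := hΦ.of_le le_minSmoothness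
  have hΦt : DifferentiableAt 𝕜 (Φ t) (Ψ t x) :=
    (hasFDerivAt_curry_right (hΦ₂.differentiableAt two_ne_zero)).differentiableAt
  rw [divergence, (hasFDerivAt_eulerianVelocity hΦ₂ hΨ).fderiv]
  exact hasDerivAt_continuousLinearMap_det (hasDerivAt_fderiv_curry hΦ)
    (fderiv_comp_fderiv_eq_id hΦt hΨ hinv)

theorem incompressible_velocity_div_free_general {J : E → 𝕜}
    (hΦ : ContDiff 𝕜 (minSmoothness 𝕜 2) (uncurry Φ)) (hΨ : ∀ t, Differentiable 𝕜 (Ψ t))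
    (hinv : ∀ t, RightInverse (Ψ t) (Φ t)) (hJ : ∀ t X, (fderiv 𝕜 (Φ t) X).det = J X)
    (t : 𝕜) (x : E) : divergence 𝕜 (eulerianVelocity Φ Ψ t) x = 0 := by
  have hrate := hasDerivAt_det_fderiv (t := t) (x := x) hΦ.contDiffAt (hΨ t x)
    (.of_forall (hinv t))
  have hΦt : DifferentiableAt 𝕜 (Φ t) (Ψ t x) :=
    (hasFDerivAt_curry_right
      ((hΦ.of_le le_minSmoothness).differentiable two_ne_zero _)).differentiableAt
  have hne : (fderiv 𝕜 (Φ t) (Ψ t x)).det ≠ 0 :=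
    det_ne_zero_of_comp_eq_id (fderiv_comp_fderiv_eq_id hΦt (hΨ t x) (.of_forall (hinv t)))
  have hconst : HasDerivAt (fun s => (fderiv 𝕜 (Φ s) (Ψ t x)).det) 0 t := by
    simp only [hJ]
    exact hasDerivAt_const t _
  exact (mul_eq_zero.mp (hrate.unique hconst)).resolve_right hne

end Velocity

section Coordinates

variable {𝕜 ι : Type*} [RCLike 𝕜] [Fintype ι]

theorem det_of_apply_single [DecidableEq ι]
    (L : EuclideanSpace 𝕜 ι →L[𝕜] EuclideanSpace 𝕜 ι) :
    (Matrix.of fun i j => L (EuclideanSpace.single j 1) i).det = L.det := by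
  rw [ContinuousLinearMap.det, ← LinearMap.det_toMatrix (EuclideanSpace.basisFun ι 𝕜).toBasis]
  rfl

theorem divergence_eq_sum_fderiv [DecidableEq ι] {u : EuclideanSpace 𝕜 ι → EuclideanSpace 𝕜 ι}
    {x : EuclideanSpace 𝕜 ι} (hu : DifferentiableAt 𝕜 u x) :
    divergence 𝕜 u x = ∑ k, fderiv 𝕜 (fun y => u y k) x (EuclideanSpace.single k 1) := by
  rw [divergence, LinearMap.trace_eq_matrix_trace 𝕜 (EuclideanSpace.basisFun ι 𝕜).toBasis]
  refine Finset.sum_congr rfl fun k _ => ?_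
  have hk : HasFDerivAt (fun y => u y k) (EuclideanSpace.proj k ∘L fderiv 𝕜 u x) x :=
    (EuclideanSpace.proj (𝕜 := 𝕜) k).hasFDerivAt.comp x hu.hasFDerivAt
  simp [hk.fderiv, LinearMap.toMatrix_apply]

theorem eulerianVelocity_apply {α : Type*} {Φ : 𝕜 → α → EuclideanSpace 𝕜 ι}
    {Ψ : 𝕜 → EuclideanSpace 𝕜 ι → α} {t : 𝕜} {x : EuclideanSpace 𝕜 ι}
    (hΦ : DifferentiableAt 𝕜 (fun s => Φ s (Ψ t x)) t) (i : ι) :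
    eulerianVelocity Φ Ψ t x i = deriv (fun s => Φ s (Ψ t x) i) t :=
  ((EuclideanSpace.proj (𝕜 := 𝕜) i).hasFDerivAt.comp_hasDerivAt t hΦ.hasDerivAt).deriv.symm

end Coordinates

/-- for a smooth family of diffeomorphisms `Φ(t,·)` with smooth inverse
`Ψ(t,·)` satisfying `det D_XΦ ≡ 1`, the Eulerian velocity `v(t,x) = (∂_tΦ)(t,Ψ(t,x))` is
divergence free: `∂_k v_k = 0`. -/
theorem incompressible_velocity_div_free
    (Φ Ψ : ℝ → E3 → E3)
    (hΦ : ContDiff ℝ (⊤ : ℕ∞) (fun z : ℝ × E3 => Φ z.1 z.2))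
    (hΨ : ContDiff ℝ (⊤ : ℕ∞) (fun z : ℝ × E3 => Ψ z.1 z.2))
    (hinv₁ : ∀ t x, Φ t (Ψ t x) = x)
    (hinv₂ : ∀ t X, Ψ t (Φ t X) = X)
    (hdet : ∀ t X, (Matrix.of fun i j : Fin 3 =>
      fderiv ℝ (Φ t) X (EuclideanSpace.single j 1) i).det = 1)
    (v : ℝ → E3 → Fin 3 → ℝ)
    (hv : ∀ t x i, v t x i = deriv (fun s => Φ s (Ψ t x) i) t) :
    ∀ t x, ∑ k, pd k (fun y => v t y k) x = 0 := by
  intro t x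
  have hΦ₂ : ContDiff ℝ 2 (Function.uncurry Φ) := hΦ.of_le (by norm_cast)
  have hΨd (t) : Differentiable ℝ (Ψ t) := fun x =>
    (hasFDerivAt_curry_right (hΨ.differentiable (by simp) (t, x))).differentiableAt
  have hvel (k) : (fun y => v t y k) = fun y => eulerianVelocity Φ Ψ t y k := by
    ext y
    rw [hv, eulerianVelocity_apply (hasDerivAt_curry_left
      (hΦ₂.differentiable two_ne_zero (t, Ψ t y))).differentiableAt]
  calc ∑ k, pd k (fun y => v t y k) x
      = divergence ℝ (eulerianVelocity Φ Ψ t) x := by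
        simp only [hvel, pd]
        exact (divergence_eq_sum_fderiv
          (hasFDerivAt_eulerianVelocity hΦ₂.contDiffAt (hΨd t x)).differentiableAt).symm
    _ = 0 := incompressible_velocity_div_free_general (J := 1) (by simpa using hΦ₂) hΨd hinv₁
        (fun t X => (det_of_apply_single _).symm.trans (hdet t X)) t x

end
end
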